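/- arXiv:1403.1441 — 3 statements merged into one kernel-verified Lean document; each statement's English description precedes it below -/
import Mathlib

section
/- Let X = (X_1, X_2, …) be a sequence of ℝ^d-valued random vectors with partial sums S_n := X_1 + … + X_n, let A_n be d×d real matrices and b_n ∈ ℝ^d, and assume: (ii) the triangular array (A_n X_j : 1 ≤ j ≤ n, n ≥ 1) is infinitesimal; (iii) the distributions of A_n S_n + b_n converge weakly to a full probability measure μ on ℝ^d. Then A_n → 0 (the zero matrix) as n → ∞, and A_n is invertible for all sufficiently large n. -/
open MeasureTheory Filter Topology Matrix

/-- Convolution of two Borel measures on `ℝ^d`. -/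
noncomputable def mconv {d : ℕ} (μ ν : Measure (Fin d → ℝ)) : Measure (Fin d → ℝ) :=
  (μ.prod ν).map (fun p => p.1 + p.2)

/-- The Urbanik decomposability semigroup `D(μ)`: all matrices `A` such that
`μ = (A_*μ) ∗ ν` for some probability measure `ν`. -/
def UrbanikD {d : ℕ} (μ : Measure (Fin d → ℝ)) : Set (Matrix (Fin d) (Fin d) ℝ) :=
  {A | ∃ ν : Measure (Fin d → ℝ), IsProbabilityMeasure ν ∧ μ = mconv (μ.map A.mulVec) ν}

/-- A measure on `ℝ^d` is full if its support is not contained in any hyperplane,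
i.e. no translate `v + L` of a proper linear subspace `L` carries all of its mass. -/
def IsFull {d : ℕ} (μ : Measure (Fin d → ℝ)) : Prop :=
  ∀ (v : Fin d → ℝ) (L : Submodule ℝ (Fin d → ℝ)), L ≠ ⊤ → μ {x | x - v ∈ L} < 1

/-- Weak convergence of a sequence of measures on `ℝ^d`. -/
def WeakLim {d : ℕ} (μs : ℕ → Measure (Fin d → ℝ)) (μ : Measure (Fin d → ℝ)) : Prop :=
  ∀ f : BoundedContinuousFunction (Fin d → ℝ) ℝ,
    Tendsto (fun n => ∫ x, f x ∂(μs n)) atTop (𝓝 (∫ x, f x ∂μ))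

/-- Partial sums `S_n = X_1 + ... + X_n`. -/
def partialSum {Ω : Type*} {d : ℕ} (X : ℕ → Ω → (Fin d → ℝ)) (n : ℕ) (ω : Ω) :
    Fin d → ℝ :=
  ∑ j ∈ Finset.Icc 1 n, X j ω

/-- The triangular array `(A_n X_j : 1 ≤ j ≤ n, n ≥ 1)` is infinitesimal:
`sup_{1 ≤ j ≤ n} P(‖A_n X_j‖ ≥ ε) → 0` as `n → ∞`, for every `ε > 0`. -/
def Infinitesimal {Ω : Type*} [MeasurableSpace Ω] {d : ℕ} (P : Measure Ω)
    (A : ℕ → Matrix (Fin d) (Fin d) ℝ) (X : ℕ → Ω → (Fin d → ℝ)) : Prop :=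
  ∀ ε > (0 : ℝ), ∀ δ > (0 : ℝ), ∃ N : ℕ, ∀ n ≥ N, ∀ j : ℕ, 1 ≤ j → j ≤ n →
    (P {ω | ε ≤ ‖(A n).mulVec (X j ω)‖}).toReal < δ

/-- Along a weakly convergent sequence, a neighbourhood of a point of the support of the limit
eventually has nonzero mass. -/
lemma WeakLim.eventually_ball_ne_zero {d : ℕ} {ν : ℕ → Measure (Fin d → ℝ)}
    {μ : Measure (Fin d → ℝ)} [IsProbabilityMeasure μ] (h : WeakLim ν μ) {x : Fin d → ℝ}
    (hx : x ∈ μ.support) {r : ℝ} (hr : 0 < r) :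
    ∀ᶠ n in atTop, ν n (Metric.ball x r) ≠ 0 := by
  let g : BoundedContinuousFunction (Fin d → ℝ) ℝ :=
    BoundedContinuousFunction.ofNormedAddCommGroup (fun y => max 0 (r - dist y x))
      (by fun_prop) r (fun y => by
        rw [Real.norm_of_nonneg (le_max_left _ _)]
        exact max_le hr.le (by linarith [dist_nonneg (x := y) (y := x)]))
  have hg : ∀ y, g y = max 0 (r - dist y x) := fun y => rfl
  have hsupp : Function.support g = Metric.ball x r := by
    ext y
    simp only [Function.mem_support, hg, Metric.mem_ball]
    constructor
    · intro hy
      by_contra hlt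
      exact hy (max_eq_left (by linarith))
    · intro hy
      rw [max_eq_right (by linarith)]
      linarith
  have hpos : 0 < ∫ y, g y ∂μ := by
    have hnonneg : 0 ≤ (g : (Fin d → ℝ) → ℝ) := fun y => le_max_left _ _
    rw [integral_pos_iff_support_of_nonneg hnonneg (g.integrable μ), hsupp]
    exact (Measure.mem_support_iff_forall x).1 hx _ (Metric.ball_mem_nhds x hr)
  filter_upwards [(h g).eventually (lt_mem_nhds hpos)] with n hn h0
  refine hn.ne' (integral_eq_zero_of_ae ?_)
  rw [← hsupp] at h0
  exact h0

/-- A full measure is not a weak limit of measures infinitely many of which are carried by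
hyperplanes. -/
lemma IsFull.not_frequently_ae_mem_hyperplane {d : ℕ} {ν : ℕ → Measure (Fin d → ℝ)}
    {μ : Measure (Fin d → ℝ)} [IsProbabilityMeasure μ] (hfull : IsFull μ) (h : WeakLim ν μ) :
    ¬ ∃ᶠ n in atTop, ∃ L : Submodule ℝ (Fin d → ℝ), L ≠ ⊤ ∧ ∃ v, ∀ᵐ x ∂ν n, x - v ∈ L := by
  intro hfreq
  have hfun : ∃ᶠ n in atTop, ∃ f : (Fin d → ℝ) →L[ℝ] ℝ, ‖f‖ = 1 ∧ ∃ c, ∀ᵐ x ∂ν n, f x = c := by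
    refine hfreq.mono ?_
    rintro n ⟨L, hL, v, hv⟩
    obtain ⟨f, hf0, hf⟩ := Submodule.exists_le_ker_of_lt_top L hL.lt_top
    set F : (Fin d → ℝ) →L[ℝ] ℝ := f.toContinuousLinearMap with hF
    have hF0 : F ≠ 0 := by simpa [hF] using hf0
    refine ⟨‖F‖⁻¹ • F, norm_smul_inv_norm hF0, ‖F‖⁻¹ * F v, ?_⟩
    filter_upwards [hv] with x hx
    have : F (x - v) = 0 := hf hx
    rw [map_sub, sub_eq_zero] at this
    simp [this]
  obtain ⟨φ, hφ, hbad⟩ := extraction_of_frequently_atTop hfun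
  choose f hf c hc using hbad
  obtain ⟨θ, hθ, ψ, hψ, hlim⟩ := (isCompact_sphere (0 : (Fin d → ℝ) →L[ℝ] ℝ) 1).tendsto_subseq
    (x := f) (fun n => by simp [hf])
  have hθ0 : θ ≠ 0 := by
    rintro rfl
    simp at hθ
  have hker : θ.toLinearMap.ker ≠ ⊤ := by
    rw [Ne, LinearMap.ker_eq_top]
    exact fun h0 => hθ0 (by exact_mod_cast h0)
  obtain ⟨x, hx⟩ : μ.support.Nonempty := μ.nonempty_support (IsProbabilityMeasure.ne_zero μ)
  obtain ⟨y, hy, hxy⟩ : ∃ y ∈ μ.support, θ y ≠ θ x := by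
    by_contra! hall
    refine (hfull x _ hker).ne ?_
    rw [← measure_univ (μ := μ)]
    refine measure_congr ?_
    filter_upwards [μ.support_mem_ae] with y hy
    have : y - x ∈ θ.toLinearMap.ker := by
      simp [hall y hy]
    exact propext ⟨fun _ => trivial, fun _ => this⟩
  obtain ⟨U, V, hU, hV, hθy, hθx, hUV⟩ := t2_separation hxy
  have key : ∀ z ∈ μ.support, ∀ W : Set ℝ, IsOpen W → θ z ∈ W →
      ∀ᶠ n in atTop, c (ψ n) ∈ W := by
    intro z hz W hW hzW
    have hcont : Continuous fun p : ((Fin d → ℝ) →L[ℝ] ℝ) × (Fin d → ℝ) => p.1 p.2 := by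
      fun_prop
    have hev : ∀ᶠ p in 𝓝 θ ×ˢ 𝓝 z, p.1 p.2 ∈ W := by
      rw [← nhds_prod_eq]
      exact hcont.continuousAt.eventually (hW.mem_nhds hzW)
    obtain ⟨p, hp, q, hq, hpq⟩ := eventually_prod_iff.1 hev
    obtain ⟨r, hr, hball⟩ := Metric.eventually_nhds_iff_ball.1 hq
    have hmass := (hφ.comp hψ).tendsto_atTop.eventually (h.eventually_ball_ne_zero hz hr)
    filter_upwards [hlim.eventually hp, hmass] with n hn hmn
    obtain ⟨u, hu, huc⟩ := ((frequently_ae_mem_iff.2 hmn).and_eventually (hc (ψ n))).exists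
    rw [← huc]
    exact hpq hn (hball u hu)
  obtain ⟨n, hn₁, hn₂⟩ := ((key y hy U hU hθy).and (key x hx V hV hθx)).exists
  exact Set.disjoint_left.1 hUV hn₁ hn₂

section

attribute [local instance] Matrix.normedAddCommGroup Matrix.normedSpace

/-- If matrices `A n` do not tend to zero while `A n • X j → 0` in probability for each `j`,
then all `X j` lie almost surely in the kernel of a common nonzero matrix. -/
lemma exists_ne_zero_ae_mulVec_eq_zero {d : ℕ} {Ω : Type*} [MeasurableSpace Ω] {P : Measure Ω}
    {X : ℕ → Ω → (Fin d → ℝ)} {A : ℕ → Matrix (Fin d) (Fin d) ℝ}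
    (hX : ∀ j, 1 ≤ j → TendstoInMeasure P (fun n ω => A n *ᵥ X j ω) atTop 0)
    (hA : ¬ Tendsto A atTop (𝓝 0)) :
    ∃ B : Matrix (Fin d) (Fin d) ℝ, B ≠ 0 ∧ ∀ j, 1 ≤ j → ∀ᵐ ω ∂P, B *ᵥ X j ω = 0 := by
  obtain ⟨ε, hε, hfreq⟩ : ∃ ε > 0, ∃ᶠ n in atTop, ε ≤ ‖A n‖ := by
    by_contra! hsmall
    refine hA (tendsto_zero_iff_norm_tendsto_zero.2 ?_)
    refine Metric.tendsto_nhds.2 fun ε hε => ?_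
    simpa using hsmall ε hε
  obtain ⟨φ, hφ, hlarge⟩ := extraction_of_frequently_atTop hfreq
  have hne : ∀ n, A (φ n) ≠ 0 := fun n => norm_pos_iff.1 (hε.trans_le (hlarge n))
  have : ProperSpace (Matrix (Fin d) (Fin d) ℝ) := FiniteDimensional.proper ℝ _
  obtain ⟨B, hB, ψ, hψ, hlim⟩ := (isCompact_sphere (0 : Matrix (Fin d) (Fin d) ℝ) 1).tendsto_subseq
    (x := fun n => ‖A (φ n)‖⁻¹ • A (φ n))
    (fun n => by simpa using norm_smul_inv_norm (𝕜 := ℝ) (hne n))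
  refine ⟨B, ?_, fun j hj => ?_⟩
  · rintro rfl
    simp at hB
  have hmeas : TendstoInMeasure P (fun n ω => A (φ (ψ n)) *ᵥ X j ω) atTop 0 :=
    fun δ hδ => (hX j hj δ hδ).comp (hφ.comp hψ).tendsto_atTop
  obtain ⟨σ, hσ, hae⟩ := hmeas.exists_seq_tendsto_ae
  filter_upwards [hae] with ω hω
  have hto_B : Tendsto (fun n => (‖A (φ (ψ (σ n)))‖⁻¹ • A (φ (ψ (σ n)))) *ᵥ X j ω) atTop
      (𝓝 (B *ᵥ X j ω)) := by
    have hcont : Continuous fun M : Matrix (Fin d) (Fin d) ℝ => M *ᵥ X j ω := by fun_prop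
    exact (hcont.tendsto B).comp (hlim.comp hσ.tendsto_atTop)
  refine tendsto_nhds_unique hto_B ?_
  refine squeeze_zero_norm (a := fun n => ε⁻¹ * ‖A (φ (ψ (σ n))) *ᵥ X j ω‖) (fun n => ?_) ?_
  · rw [Matrix.smul_mulVec, norm_smul, norm_inv, norm_norm]
    gcongr
    exact hlarge _
  · simpa using (hω.norm.const_mul ε⁻¹)

end

/-- Infinitesimality of the array gives `A n • X j → 0` in probability for each fixed `j`. -/
lemma Infinitesimal.tendstoInMeasure {d : ℕ} {Ω : Type*} [MeasurableSpace Ω] {P : Measure Ω}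
    [IsProbabilityMeasure P] {X : ℕ → Ω → (Fin d → ℝ)} {A : ℕ → Matrix (Fin d) (Fin d) ℝ}
    (h : Infinitesimal P A X) {j : ℕ} (hj : 1 ≤ j) :
    TendstoInMeasure P (fun n ω => A n *ᵥ X j ω) atTop 0 := by
  refine tendstoInMeasure_iff_measureReal_norm.2 fun ε hε => Metric.tendsto_atTop.2 fun δ hδ => ?_
  obtain ⟨N, hN⟩ := h ε hε δ hδ
  refine ⟨max N j, fun n hn => ?_⟩
  simpa [Measure.real] using hN n (le_of_max_le_left hn) j hj (le_of_max_le_right hn)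

/-- **Proposition 1(a).** Under infinitesimality and weak convergence to a full law,
`A_n → 0` and `A_n` is invertible for all sufficiently large `n`. -/
theorem normalizers_tendsto_zero_and_eventually_invertible
    {d : ℕ} {Ω : Type*} [MeasurableSpace Ω] (P : Measure Ω) [IsProbabilityMeasure P]
    (X : ℕ → Ω → (Fin d → ℝ)) (hXmeas : ∀ j, Measurable (X j))
    (A : ℕ → Matrix (Fin d) (Fin d) ℝ) (b : ℕ → Fin d → ℝ)
    (μ : Measure (Fin d → ℝ)) [IsProbabilityMeasure μ] (hfull : IsFull μ)
    (hinf : Infinitesimal P A X)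
    (hconv : WeakLim (fun n => P.map (fun ω => (A n).mulVec (partialSum X n ω) + b n)) μ) :
    Tendsto A atTop (𝓝 0) ∧ ∃ N : ℕ, ∀ n ≥ N, IsUnit (A n) := by
  have hmeas : ∀ n, Measurable fun ω => (A n).mulVec (partialSum X n ω) + b n := by
    intro n
    have hsum : Measurable (partialSum X n) := by
      unfold partialSum
      fun_prop
    have hcont : Continuous fun x => A n *ᵥ x := by fun_prop
    exact (hcont.measurable.comp hsum).add_const _
  have hset : ∀ (L : Submodule ℝ (Fin d → ℝ)) (v : Fin d → ℝ), MeasurableSet {x | x - v ∈ L} :=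
    fun L v => (L.closed_of_finiteDimensional.preimage (continuous_sub_right v)).measurableSet
  have hnot := hfull.not_frequently_ae_mem_hyperplane hconv
  constructor
  · by_contra hA
    obtain ⟨B, hB0, hB⟩ :=
      exists_ne_zero_ae_mulVec_eq_zero (fun j hj => hinf.tendstoInMeasure hj) hA
    refine hnot (Eventually.frequently (Eventually.of_forall fun n => ?_))
    have hker : B.mulVecLin.ker ≠ ⊤ := by
      rw [Ne, LinearMap.ker_eq_top]
      exact fun h0 => hB0 (Matrix.toLin'.map_eq_zero_iff.1 h0)
    refine ⟨B.mulVecLin.ker.map (A n).mulVecLin, fun htop => ?_, b n, ?_⟩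
    · have hle := Submodule.finrank_map_le (A n).mulVecLin B.mulVecLin.ker
      have hlt := Submodule.finrank_lt hker
      rw [htop, finrank_top] at hle
      exact hlt.not_ge hle
    · rw [ae_map_iff (hmeas n).aemeasurable (hset _ _)]
      have hall : ∀ᵐ ω ∂P, ∀ j, 1 ≤ j → B *ᵥ X j ω = 0 :=
        ae_all_iff.2 fun j => eventually_imp_distrib_left.2 (hB j)
      filter_upwards [hall] with ω hω
      rw [add_sub_cancel_right]
      refine Submodule.mem_map_of_mem (f := (A n).mulVecLin) (Submodule.sum_mem _ fun j hj => ?_)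
      exact hω j (Finset.mem_Icc.1 hj).1
  · rw [← eventually_atTop]
    by_contra hunit
    refine hnot ((not_eventually.1 hunit).mono fun n hn => ?_)
    refine ⟨(A n).mulVecLin.range, fun htop => hn ?_, b n, ?_⟩
    · exact Matrix.mulVec_surjective_iff_isUnit.1 (LinearMap.range_eq_top.1 htop)
    · rw [ae_map_iff (hmeas n).aemeasurable (hset _ _)]
      refine Eventually.of_forall fun ω => ?_
      rw [add_sub_cancel_right]
      exact ⟨_, rfl⟩
end

section
/- Let X = (X_1, X_2, …) be a sequence of ℝ^d-valued random vectors with partial sums S_n := X_1 + … + X_n, let A_n be d×d real matrices and b_n ∈ ℝ^d, and assume: (ii) the triangular array (A_n X_j : 1 ≤ j ≤ n, n ≥ 1) is infinitesimal; (iii) the distributions of A_n S_n + b_n converge weakly to a full probability measure μ on ℝ^d. Then there exist invertible d×d real matrices Ã_n and vectors b̃_n ∈ ℝ^d such that conditions (ii) and (iii) hold with (Ã_n, b̃_n) in place of (A_n, b_n) (with the same limit law up to the same fullness), and Ã_{n+1} Ã_n^{−1} → I (the identity matrix) as n → ∞. -/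
open MeasureTheory Filter Topology Matrix

section AffineActions

instance {m n : Type*} [Fintype m] [Fintype n] :
    TopologicalSpace.PseudoMetrizableSpace (Matrix m n ℝ) :=
  inferInstanceAs (TopologicalSpace.PseudoMetrizableSpace (m → n → ℝ))

open scoped Matrix.Norms.Operator

variable {d : ℕ}

/-- The affine map `x ↦ T.1 x + T.2` of `ℝ^d` encoded by a matrix and a vector. -/
def affineAct (T : Matrix (Fin d) (Fin d) ℝ × (Fin d → ℝ)) (x : Fin d → ℝ) : Fin d → ℝ :=
  T.1 *ᵥ x + T.2

/-- The affine maps preserving `μ`. -/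
def affineStabilizer (μ : Measure (Fin d → ℝ)) :
    Set (Matrix (Fin d) (Fin d) ℝ × (Fin d → ℝ)) :=
  {T | μ.map (affineAct T) = μ}

lemma continuous_affineAct_uncurry :
    Continuous fun p : (Fin d → ℝ) × (Matrix (Fin d) (Fin d) ℝ × (Fin d → ℝ)) =>
      affineAct p.2 p.1 := by
  unfold affineAct
  fun_prop

lemma continuous_affineAct (T : Matrix (Fin d) (Fin d) ℝ × (Fin d → ℝ)) :
    Continuous (affineAct T) := by
  unfold affineAct
  fun_prop

lemma measurable_affineAct (T : Matrix (Fin d) (Fin d) ℝ × (Fin d → ℝ)) :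
    Measurable (affineAct T) :=
  (continuous_affineAct T).measurable

lemma weakLim_iff_tendstoInDistribution {Ω : Type*} [MeasurableSpace Ω] {P : Measure Ω}
    [IsProbabilityMeasure P] {μ : Measure (Fin d → ℝ)} [IsProbabilityMeasure μ]
    {Y : ℕ → Ω → Fin d → ℝ} (hY : ∀ n, Measurable (Y n)) :
    WeakLim (fun n => P.map (Y n)) μ ↔ TendstoInDistribution Y atTop id (fun _ => P) μ := by
  constructor
  · intro h
    refine ⟨fun n => (hY n).aemeasurable, aemeasurable_id, ?_⟩
    refine ProbabilityMeasure.tendsto_iff_forall_integral_tendsto.2 fun f => ?_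
    simpa using h f
  · intro h f
    have := ProbabilityMeasure.tendsto_iff_forall_integral_tendsto.1 h.tendsto f
    simpa using this

lemma TendstoInDistribution.comp_tendsto_atTop {Ω Ω' : Type*} [MeasurableSpace Ω]
    [MeasurableSpace Ω'] {P : Measure Ω} [IsProbabilityMeasure P] {ν : Measure Ω'}
    [IsProbabilityMeasure ν] {Y : ℕ → Ω → Fin d → ℝ} {Z : Ω' → Fin d → ℝ}
    (hY : TendstoInDistribution Y atTop Z (fun _ => P) ν) {φ : ℕ → ℕ}
    (hφ : Tendsto φ atTop atTop) :
    TendstoInDistribution (fun n => Y (φ n)) atTop Z (fun _ => P) ν :=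
  ⟨fun n => hY.forall_aemeasurable (φ n), hY.aemeasurable_limit, hY.tendsto.comp hφ⟩

/-- Slutsky's theorem for a convergent sequence of affine maps. -/
lemma TendstoInDistribution.affineAct {Ω Ω' : Type*} [MeasurableSpace Ω]
    [MeasurableSpace Ω'] {P : Measure Ω} [IsProbabilityMeasure P] {ν : Measure Ω'}
    [IsProbabilityMeasure ν] {Y : ℕ → Ω → Fin d → ℝ} {Z : Ω' → Fin d → ℝ}
    (hY : TendstoInDistribution Y atTop Z (fun _ => P) ν)
    {T : ℕ → Matrix (Fin d) (Fin d) ℝ × (Fin d → ℝ)}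
    {T₀ : Matrix (Fin d) (Fin d) ℝ × (Fin d → ℝ)} (hT : Tendsto T atTop (𝓝 T₀)) :
    TendstoInDistribution (fun n ω => _root_.affineAct (T n) (Y n ω)) atTop
      (fun ω => _root_.affineAct T₀ (Z ω)) (fun _ => P) ν := by
  have hg : Continuous fun p : (Fin d → ℝ) × ((Fin d → Fin d → ℝ) × (Fin d → ℝ)) =>
      _root_.affineAct p.2 p.1 := continuous_affineAct_uncurry
  refine hY.continuous_comp_prodMk_of_tendstoInMeasure_const (μ' := ν) hg
    (Y := fun n _ => T n) (c := T₀) ?_ (fun _ => aemeasurable_const)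
  exact tendstoInMeasure_of_tendsto_ae (fun _ => aestronglyMeasurable_const)
    (ae_of_all _ fun _ => hT)

lemma IsFull.eq_zero_of_ae_affineAct_eq_zero {μ : Measure (Fin d → ℝ)} [IsProbabilityMeasure μ]
    (hμ : IsFull μ) {T : Matrix (Fin d) (Fin d) ℝ × (Fin d → ℝ)}
    (hT : ∀ᵐ x ∂μ, affineAct T x = 0) : T = 0 := by
  obtain ⟨x₀, hx₀⟩ := hT.exists
  have hker : LinearMap.ker (Matrix.mulVecLin T.1) = ⊤ := by
    by_contra hne
    refine (hμ x₀ _ hne).ne ((measure_congr (eventuallyEq_univ.2 ?_)).trans measure_univ)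
    filter_upwards [hT] with x hx
    have : T.1 *ᵥ x = T.1 *ᵥ x₀ := add_right_cancel (hx.trans hx₀.symm)
    simp [Matrix.mulVec_sub, this]
  have h₁ : T.1 = 0 := by
    have h := LinearMap.ker_eq_top.1 hker
    ext i j
    have := congrFun (LinearMap.congr_fun h (Pi.single j 1)) i
    simpa using this
  refine Prod.ext h₁ ?_
  simpa [affineAct, h₁] using hx₀

/-- Affine maps carrying a sequence with full limit law to a convergent sequence cannot tend
to infinity. -/
lemma IsFull.not_tendsto_norm_atTop {Ω Ω' : Type*} [MeasurableSpace Ω]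
    [MeasurableSpace Ω'] {P : Measure Ω} [IsProbabilityMeasure P] {ν : Measure Ω'}
    [IsProbabilityMeasure ν] {μ : Measure (Fin d → ℝ)} [IsProbabilityMeasure μ] (hμ : IsFull μ)
    {Y : ℕ → Ω → Fin d → ℝ} (hY : TendstoInDistribution Y atTop id (fun _ => P) μ)
    {T : ℕ → Matrix (Fin d) (Fin d) ℝ × (Fin d → ℝ)} {W : Ω' → Fin d → ℝ}
    (hTY : TendstoInDistribution (fun n ω => affineAct (T n) (Y n ω)) atTop W (fun _ => P) ν) :
    ¬ Tendsto (fun n => ‖T n‖) atTop atTop := by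
  intro hT
  have : ProperSpace (Matrix (Fin d) (Fin d) ℝ × (Fin d → ℝ)) := FiniteDimensional.proper ℝ _
  have hle : ∀ n, ‖T n‖⁻¹ • T n ∈ Metric.closedBall
      (0 : Matrix (Fin d) (Fin d) ℝ × (Fin d → ℝ)) 1 := fun n => by
    rw [mem_closedBall_zero_iff, norm_smul, norm_inv, norm_norm]
    exact inv_mul_le_one
  obtain ⟨U, -, φ, hφ, hU⟩ := (isCompact_closedBall _ _).tendsto_subseq hle
  have hTφ := hT.comp hφ.tendsto_atTop
  have hnorm : ‖U‖ = 1 := by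
    refine tendsto_nhds_unique hU.norm (tendsto_const_nhds.congr' ?_)
    filter_upwards [hTφ.eventually_gt_atTop 0] with n hn
    simp only [Function.comp_apply, norm_smul, norm_inv, norm_norm] at hn ⊢
    exact (inv_mul_cancel₀ hn.ne').symm
  have h₁ := TendstoInDistribution.affineAct
    (TendstoInDistribution.comp_tendsto_atTop hY hφ.tendsto_atTop) hU
  have hscale : Tendsto (fun n => ((‖T (φ n)‖⁻¹ • (1 : Matrix (Fin d) (Fin d) ℝ),
      (0 : Fin d → ℝ)))) atTop (𝓝 (0, 0)) := by
    refine Tendsto.prodMk_nhds ?_ tendsto_const_nhds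
    simpa using (tendsto_inv_atTop_zero.comp hTφ).smul_const (1 : Matrix (Fin d) (Fin d) ℝ)
  have h₂ := TendstoInDistribution.affineAct
    (TendstoInDistribution.comp_tendsto_atTop hTY hφ.tendsto_atTop) hscale
  have heq : (fun n ω => affineAct (‖T (φ n)‖⁻¹ • (1 : Matrix (Fin d) (Fin d) ℝ), 0)
      (affineAct (T (φ n)) (Y (φ n) ω))) =
      fun n ω => affineAct (((fun n => ‖T n‖⁻¹ • T n) ∘ φ) n) (Y (φ n) ω) := by
    funext n ω
    simp [affineAct, Matrix.smul_mulVec]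
  rw [heq] at h₂
  have hlaw := tendstoInDistribution_unique _ h₁ h₂
  have hae : ∀ᵐ x ∂μ, affineAct U x = 0 := by
    have hmeas : MeasurableSet {y : Fin d → ℝ | y = 0} := measurableSet_singleton 0
    refine (ae_map_iff (measurable_affineAct U).aemeasurable hmeas).1 ?_
    change ∀ᵐ y ∂(μ.map fun x => affineAct U (id x)), y = 0
    rw [hlaw]
    refine (ae_map_iff ((measurable_affineAct _).comp_aemeasurable
      hTY.aemeasurable_limit) hmeas).2 ?_
    simp [affineAct]
  simp [hμ.eq_zero_of_ae_affineAct_eq_zero hae] at hnorm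

/-- Convergence of types: affine maps between two sequences with the same full limit law
accumulate at an affine map preserving that law. -/
lemma IsFull.exists_subseq_tendsto_affineStabilizer {Ω : Type*} [MeasurableSpace Ω]
    {P : Measure Ω} [IsProbabilityMeasure P] {μ : Measure (Fin d → ℝ)} [IsProbabilityMeasure μ]
    (hμ : IsFull μ) {Y : ℕ → Ω → Fin d → ℝ}
    (hY : TendstoInDistribution Y atTop id (fun _ => P) μ)
    {T : ℕ → Matrix (Fin d) (Fin d) ℝ × (Fin d → ℝ)}
    (hTY : TendstoInDistribution (fun n ω => affineAct (T n) (Y n ω)) atTop id (fun _ => P) μ) :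
    ∃ T₀ ∈ affineStabilizer μ, ∃ φ : ℕ → ℕ, StrictMono φ ∧ Tendsto (T ∘ φ) atTop (𝓝 T₀) := by
  have : ProperSpace (Matrix (Fin d) (Fin d) ℝ × (Fin d → ℝ)) := FiniteDimensional.proper ℝ _
  obtain ⟨R, hR⟩ : ∃ R : ℝ, ∃ᶠ n in atTop, T n ∈ Metric.closedBall
      (0 : Matrix (Fin d) (Fin d) ℝ × (Fin d → ℝ)) R := by
    by_contra! h
    refine hμ.not_tendsto_norm_atTop hY hTY (tendsto_atTop.2 fun R => ?_)
    filter_upwards [h R] with n hn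
    rw [mem_closedBall_zero_iff, not_le] at hn
    exact hn.le
  obtain ⟨T₀, -, φ, hφ, hT₀⟩ := (isCompact_closedBall _ _).tendsto_subseq' hR
  refine ⟨T₀, ?_, φ, hφ, hT₀⟩
  have h₁ := TendstoInDistribution.affineAct
    (TendstoInDistribution.comp_tendsto_atTop hY hφ.tendsto_atTop) hT₀
  have h₂ := TendstoInDistribution.comp_tendsto_atTop hTY hφ.tendsto_atTop
  have h := tendstoInDistribution_unique _ h₁ h₂
  rwa [Measure.map_id] at h

lemma IsFull.isCompact_affineStabilizer {μ : Measure (Fin d → ℝ)} [IsProbabilityMeasure μ]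
    (hμ : IsFull μ) : IsCompact (affineStabilizer μ) := by
  refine IsSeqCompact.isCompact fun T hT => ?_
  refine hμ.exists_subseq_tendsto_affineStabilizer (P := μ) (Y := fun _ => id)
    (tendstoInDistribution_const aemeasurable_id) ?_
  refine (weakLim_iff_tendstoInDistribution fun n => measurable_affineAct (T n)).1 fun f => ?_
  have h : ∀ n, μ.map (affineAct (T n)) = μ := hT
  simp [h]

lemma IsFull.isUnit_of_mem_affineStabilizer {μ : Measure (Fin d → ℝ)} [IsProbabilityMeasure μ]
    (hμ : IsFull μ) {T : Matrix (Fin d) (Fin d) ℝ × (Fin d → ℝ)}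
    (hT : T ∈ affineStabilizer μ) : IsUnit T.1 := by
  rw [← Matrix.mulVec_surjective_iff_isUnit]
  by_contra hsurj
  have hne : LinearMap.range (Matrix.mulVecLin T.1) ≠ ⊤ := fun h =>
    hsurj (LinearMap.range_eq_top.1 h)
  have hclosed := (LinearMap.range (Matrix.mulVecLin T.1)).closed_of_finiteDimensional
  have hmeas : MeasurableSet {x | x - T.2 ∈ LinearMap.range (Matrix.mulVecLin T.1)} :=
    (hclosed.preimage (continuous_id.sub continuous_const)).measurableSet
  refine (hμ T.2 _ hne).ne ?_
  have hmapT : μ.map (affineAct T) = μ := hT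
  rw [← hmapT, Measure.map_apply (measurable_affineAct T) hmeas]
  convert measure_univ (μ := μ)
  refine Set.eq_univ_of_forall fun x => ?_
  exact ⟨x, by simp [affineAct]⟩

/-- The pair encoding the composition of two affine maps. -/
def affineComp (T U : Matrix (Fin d) (Fin d) ℝ × (Fin d → ℝ)) :
    Matrix (Fin d) (Fin d) ℝ × (Fin d → ℝ) :=
  (T.1 * U.1, affineAct T U.2)

lemma affineAct_affineComp (T U : Matrix (Fin d) (Fin d) ℝ × (Fin d → ℝ)) (x : Fin d → ℝ) :
    affineAct (affineComp T U) x = affineAct T (affineAct U x) := by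
  simp [affineAct, affineComp, Matrix.mulVec_add, add_assoc]

lemma affineComp_mem_affineStabilizer {μ : Measure (Fin d → ℝ)}
    {T U : Matrix (Fin d) (Fin d) ℝ × (Fin d → ℝ)} (hT : T ∈ affineStabilizer μ)
    (hU : U ∈ affineStabilizer μ) : affineComp T U ∈ affineStabilizer μ := by
  have hmapT : μ.map (affineAct T) = μ := hT
  have hmapU : μ.map (affineAct U) = μ := hU
  have h : affineAct (affineComp T U) = affineAct T ∘ affineAct U :=
    funext (affineAct_affineComp T U)
  change μ.map _ = μ
  rw [h, ← Measure.map_map (measurable_affineAct T) (measurable_affineAct U), hmapU, hmapT]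

/-- The pair encoding the inverse of an invertible affine map. -/
noncomputable def affineInv (T : Matrix (Fin d) (Fin d) ℝ × (Fin d → ℝ)) :
    Matrix (Fin d) (Fin d) ℝ × (Fin d → ℝ) :=
  (T.1⁻¹, -(T.1⁻¹ *ᵥ T.2))

lemma IsFull.affineInv_mem_affineStabilizer {μ : Measure (Fin d → ℝ)} [IsProbabilityMeasure μ]
    (hμ : IsFull μ) {T : Matrix (Fin d) (Fin d) ℝ × (Fin d → ℝ)}
    (hT : T ∈ affineStabilizer μ) : affineInv T ∈ affineStabilizer μ := by
  have hdet := (Matrix.isUnit_iff_isUnit_det _).1 (hμ.isUnit_of_mem_affineStabilizer hT)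
  have hmapT : μ.map (affineAct T) = μ := hT
  have hid : affineAct (affineInv T) ∘ affineAct T = id := by
    funext x
    simp [affineAct, affineInv, Matrix.mulVec_add, Matrix.nonsing_inv_mul _ hdet]
  change μ.map _ = μ
  nth_rewrite 1 [← hmapT]
  rw [Measure.map_map (measurable_affineAct _) (measurable_affineAct T), hid, Measure.map_id]

lemma IsFull.tendstoInDistribution_affineAct {Ω : Type*} [MeasurableSpace Ω]
    {P : Measure Ω} [IsProbabilityMeasure P] {μ : Measure (Fin d → ℝ)} [IsProbabilityMeasure μ]
    (hμ : IsFull μ) {Y : ℕ → Ω → Fin d → ℝ}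
    (hY : TendstoInDistribution Y atTop id (fun _ => P) μ)
    {T : ℕ → Matrix (Fin d) (Fin d) ℝ × (Fin d → ℝ)} (hT : ∀ n, T n ∈ affineStabilizer μ) :
    TendstoInDistribution (fun n ω => affineAct (T n) (Y n ω)) atTop id (fun _ => P) μ := by
  refine ⟨fun n => (measurable_affineAct _).comp_aemeasurable (hY.forall_aemeasurable n),
    aemeasurable_id, tendsto_of_subseq_tendsto fun ns hns => ?_⟩
  obtain ⟨T₀, hT₀, φ, hφ, hlim⟩ := hμ.isCompact_affineStabilizer.tendsto_subseq
    fun n => hT (ns n)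
  have h := (TendstoInDistribution.affineAct (TendstoInDistribution.comp_tendsto_atTop hY
    (hns.comp hφ.tendsto_atTop)) hlim).tendsto
  have hmapT₀ : μ.map (affineAct T₀) = μ := hT₀
  have hlaw : μ.map id = μ.map fun x => affineAct T₀ (id x) := Measure.map_id.trans hmapT₀.symm
  simp_rw [← hlaw] at h
  exact ⟨φ, h⟩

lemma IsFull.exists_affineStabilizer_tendsto_dist {Ω : Type*} [MeasurableSpace Ω]
    {P : Measure Ω} [IsProbabilityMeasure P] {μ : Measure (Fin d → ℝ)} [IsProbabilityMeasure μ]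
    (hμ : IsFull μ) {Y : ℕ → Ω → Fin d → ℝ}
    (hY : TendstoInDistribution Y atTop id (fun _ => P) μ)
    {T : ℕ → Matrix (Fin d) (Fin d) ℝ × (Fin d → ℝ)}
    (hTY : TendstoInDistribution (fun n ω => affineAct (T n) (Y n ω)) atTop id (fun _ => P) μ) :
    ∃ G : ℕ → Matrix (Fin d) (Fin d) ℝ × (Fin d → ℝ), (∀ n, G n ∈ affineStabilizer μ) ∧
      Tendsto (fun n => dist (T n) (G n)) atTop (𝓝 0) := by
  have hne : (affineStabilizer μ).Nonempty :=
    let ⟨T₀, hT₀, _⟩ := hμ.exists_subseq_tendsto_affineStabilizer hY hTY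
    ⟨T₀, hT₀⟩
  choose G hG hdist using fun n =>
    hμ.isCompact_affineStabilizer.exists_infDist_eq_dist hne (T n)
  refine ⟨G, hG, ?_⟩
  simp_rw [← hdist]
  refine tendsto_of_subseq_tendsto fun ns hns => ?_
  obtain ⟨T₀, hT₀, φ, -, hlim⟩ := hμ.exists_subseq_tendsto_affineStabilizer
    (TendstoInDistribution.comp_tendsto_atTop hY hns)
    (TendstoInDistribution.comp_tendsto_atTop hTY hns)
  refine ⟨φ, ?_⟩
  have h := ((Metric.continuous_infDist_pt (affineStabilizer μ)).tendsto T₀).comp hlim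
  rwa [Metric.infDist_zero_of_mem hT₀] at h

/-- Matrices normalizing a sequence to a full limit law are eventually invertible. -/
lemma IsFull.eventually_isUnit {Ω : Type*} [MeasurableSpace Ω]
    {P : Measure Ω} [IsProbabilityMeasure P] {μ : Measure (Fin d → ℝ)} [IsProbabilityMeasure μ]
    (hμ : IsFull μ) {S : ℕ → Ω → Fin d → ℝ} {A : ℕ → Matrix (Fin d) (Fin d) ℝ}
    {b : ℕ → Fin d → ℝ}
    (hY : TendstoInDistribution (fun n ω => A n *ᵥ S n ω + b n) atTop id (fun _ => P) μ) :
    ∀ᶠ n in atTop, IsUnit (A n) := by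
  by_contra hfreq
  obtain ⟨φ, hφ, hsing⟩ := extraction_of_frequently_atTop (not_eventually.1 hfreq)
  have hkill : ∀ n, ∃ B : Matrix (Fin d) (Fin d) ℝ, B ≠ 0 ∧ B * A (φ n) = 0 := fun n => by
    have hdet : (A (φ n)).det = 0 := by
      simpa [Matrix.isUnit_iff_isUnit_det] using hsing n
    obtain ⟨v, hv, hvA⟩ := Matrix.exists_vecMul_eq_zero_iff.2 hdet
    obtain ⟨i, hi⟩ := Function.ne_iff.1 hv
    refine ⟨Matrix.of fun _ => v, fun h => hi (congrFun (congrFun h i) i), ?_⟩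
    ext k j
    exact congrFun hvA j
  choose B hB hBA using hkill
  let C : ℕ → Matrix (Fin d) (Fin d) ℝ := fun n => ((n : ℝ) * ‖B n‖⁻¹) • B n
  have hC : ∀ n, ‖C n‖ = n := fun n => by
    simp [C, norm_smul, (norm_ne_zero_iff.2 (hB n))]
  refine hμ.not_tendsto_norm_atTop (TendstoInDistribution.comp_tendsto_atTop hY hφ.tendsto_atTop)
    (T := fun n => (C n, -(C n *ᵥ b (φ n)))) (W := fun _ => (0 : Fin d → ℝ)) (ν := P) ?_ ?_
  · have h : (fun n ω => affineAct (C n, -(C n *ᵥ b (φ n))) (A (φ n) *ᵥ S (φ n) ω + b (φ n))) =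
        fun _ _ => 0 := by
      funext n ω
      simp [affineAct, C, Matrix.mulVec_add, hBA]
    rw [h]
    exact tendstoInDistribution_const aemeasurable_const
  · refine tendsto_atTop_mono (fun n => ?_) tendsto_natCast_atTop_atTop
    rw [← hC n]
    exact norm_fst_le (C n, -(C n *ᵥ b (φ n)))

lemma measurable_partialSum {Ω : Type*} [MeasurableSpace Ω] {X : ℕ → Ω → (Fin d → ℝ)}
    (hX : ∀ j, Measurable (X j)) (n : ℕ) : Measurable (partialSum X n) := by
  unfold partialSum
  exact Finset.measurable_fun_sum _ fun j _ => hX j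

lemma measurable_mulVec_partialSum_add {Ω : Type*} [MeasurableSpace Ω]
    {X : ℕ → Ω → (Fin d → ℝ)} (hX : ∀ j, Measurable (X j)) (A : Matrix (Fin d) (Fin d) ℝ)
    (b : Fin d → ℝ) (n : ℕ) : Measurable fun ω => A *ᵥ partialSum X n ω + b :=
  (measurable_affineAct (A, b)).comp (measurable_partialSum hX n)

/-- By infinitesimality, dropping the last summand does not change the limit law. -/
lemma Infinitesimal.tendstoInDistribution_drop_last {Ω : Type*} [MeasurableSpace Ω]
    {P : Measure Ω} [IsProbabilityMeasure P] {X : ℕ → Ω → (Fin d → ℝ)}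
    (hX : ∀ j, Measurable (X j)) {A : ℕ → Matrix (Fin d) (Fin d) ℝ} {b : ℕ → Fin d → ℝ}
    {μ : Measure (Fin d → ℝ)} [IsProbabilityMeasure μ] (hinf : Infinitesimal P A X)
    (hY : TendstoInDistribution (fun n ω => A n *ᵥ partialSum X n ω + b n) atTop id
      (fun _ => P) μ) :
    TendstoInDistribution (fun n ω => A (n + 1) *ᵥ partialSum X n ω + b (n + 1)) atTop id
      (fun _ => P) μ := by
  refine tendstoInDistribution_of_tendstoInMeasure_sub _ _
    (TendstoInDistribution.comp_tendsto_atTop hY (tendsto_add_atTop_nat 1)) ?_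
    fun n => (measurable_mulVec_partialSum_add hX _ _ n).aemeasurable
  rw [tendstoInMeasure_iff_measureReal_norm]
  intro ε hε
  rw [Metric.tendsto_atTop]
  intro δ hδ
  obtain ⟨N, hN⟩ := hinf ε hε δ hδ
  refine ⟨N, fun n hn => ?_⟩
  rw [Real.dist_0_eq_abs, abs_of_nonneg measureReal_nonneg]
  have h : ∀ ω, partialSum X (n + 1) ω = partialSum X n ω + X (n + 1) ω := fun ω => by
    simp [partialSum, Finset.sum_Icc_succ_top]
  simpa [h, Matrix.mulVec_add, measureReal_def] using hN (n + 1) (by omega) (n + 1) (by omega) le_rfl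

lemma Infinitesimal.bounded_mul {Ω : Type*} [MeasurableSpace Ω]
    {P : Measure Ω} [IsProbabilityMeasure P] {X : ℕ → Ω → (Fin d → ℝ)}
    {A C : ℕ → Matrix (Fin d) (Fin d) ℝ} (hinf : Infinitesimal P A X) {K : ℝ} (hK : 0 < K)
    (hC : ∀ n, ‖C n‖ ≤ K) : Infinitesimal P (fun n => C n * A n) X := by
  intro ε hε δ hδ
  obtain ⟨N, hN⟩ := hinf (ε / K) (by positivity) δ hδ
  refine ⟨N, fun n hn j h1 hj => lt_of_le_of_lt ?_ (hN n hn j h1 hj)⟩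
  refine measureReal_mono fun ω hω => ?_
  rw [Set.mem_ofPred_eq, ← Matrix.mulVec_mulVec] at hω
  rw [Set.mem_ofPred_eq, div_le_iff₀' hK]
  calc ε ≤ _ := hω
    _ ≤ ‖C n‖ * ‖A n *ᵥ X j ω‖ := Matrix.linfty_opNorm_mulVec _ _
    _ ≤ K * ‖A n *ᵥ X j ω‖ := by gcongr; exact hC n

/-- The case of invertible normalizing matrices. -/
lemma exists_modified_normalizers_of_isUnit {Ω : Type*} [MeasurableSpace Ω]
    {P : Measure Ω} [IsProbabilityMeasure P] {X : ℕ → Ω → (Fin d → ℝ)}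
    (hX : ∀ j, Measurable (X j)) {A : ℕ → Matrix (Fin d) (Fin d) ℝ} {b : ℕ → Fin d → ℝ}
    {μ : Measure (Fin d → ℝ)} [IsProbabilityMeasure μ] (hμ : IsFull μ)
    (hA : ∀ n, IsUnit (A n)) (hinf : Infinitesimal P A X)
    (hY : TendstoInDistribution (fun n ω => A n *ᵥ partialSum X n ω + b n) atTop id
      (fun _ => P) μ) :
    ∃ (A' : ℕ → Matrix (Fin d) (Fin d) ℝ) (b' : ℕ → Fin d → ℝ),
      (∀ n, IsUnit (A' n)) ∧
      Infinitesimal P A' X ∧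
      WeakLim (fun n => P.map (fun ω => (A' n).mulVec (partialSum X n ω) + b' n)) μ ∧
      Tendsto (fun n => A' (n + 1) * (A' n)⁻¹) atTop (𝓝 1) := by
  have hAdet n := (Matrix.isUnit_iff_isUnit_det _).1 (hA n)
  let D : ℕ → Matrix (Fin d) (Fin d) ℝ := fun n => A (n + 1) * (A n)⁻¹
  obtain ⟨G, hG, hGdist⟩ := hμ.exists_affineStabilizer_tendsto_dist hY
    (T := fun n => (D n, b (n + 1) - D n *ᵥ b n)) (by
      convert hinf.tendstoInDistribution_drop_last hX hY using 3 with n ω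
      simp [affineAct, D, Matrix.mulVec_add, Matrix.nonsing_inv_mul_cancel_right _ _ (hAdet n)])
  obtain ⟨C, hCzero, hCsucc⟩ : ∃ C : ℕ → Matrix (Fin d) (Fin d) ℝ × (Fin d → ℝ),
      C 0 = (1, 0) ∧ ∀ n, C (n + 1) = affineComp (C n) (affineInv (G n)) :=
    ⟨fun n => Nat.rec (1, 0) (fun k c => affineComp c (affineInv (G k))) n, rfl, fun _ => rfl⟩
  have hC : ∀ n, C n ∈ affineStabilizer μ := fun n => by
    induction n with
    | zero =>
      have h : affineAct (C 0) = id := by funext x; simp [affineAct, hCzero]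
      change μ.map _ = μ
      rw [h, Measure.map_id]
    | succ n ih =>
      rw [hCsucc]
      exact affineComp_mem_affineStabilizer ih (hμ.affineInv_mem_affineStabilizer (hG n))
  obtain ⟨K, hK, hbound⟩ := hμ.isCompact_affineStabilizer.isBounded.exists_pos_norm_le
  have hCK n : ‖(C n).1‖ ≤ K := (norm_fst_le _).trans (hbound _ (hC n))
  have hCinvK n : ‖(C n).1⁻¹‖ ≤ K :=
    (norm_fst_le (affineInv (C n))).trans (hbound _ (hμ.affineInv_mem_affineStabilizer (hC n)))
  have hCunit n := hμ.isUnit_of_mem_affineStabilizer (hC n)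
  have hCdet n := (Matrix.isUnit_iff_isUnit_det _).1 (hCunit n)
  have hGdet n := (Matrix.isUnit_iff_isUnit_det _).1 (hμ.isUnit_of_mem_affineStabilizer (hG n))
  refine ⟨fun n => (C n).1 * A n, fun n => affineAct (C n) (b n),
    fun n => (hCunit n).mul (hA n), hinf.bounded_mul hK hCK, ?_, ?_⟩
  · refine (weakLim_iff_tendstoInDistribution fun n =>
      measurable_mulVec_partialSum_add hX _ _ n).2 ?_
    convert hμ.tendstoInDistribution_affineAct hY hC using 3 with n ω
    exact affineAct_affineComp (C n) (A n, b n) _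
  · have hCG n : (C (n + 1)).1 * (G n).1 = (C n).1 := by
      simp [hCsucc, affineComp, affineInv, Matrix.nonsing_inv_mul_cancel_right _ _ (hGdet n)]
    have hdiff n : (C (n + 1)).1 * A (n + 1) * ((C n).1 * A n)⁻¹ - 1 =
        (C (n + 1)).1 * (D n - (G n).1) * (C n).1⁻¹ := by
      rw [Matrix.mul_sub, Matrix.sub_mul, hCG, Matrix.mul_nonsing_inv _ (hCdet n),
        Matrix.mul_inv_rev]
      simp only [D, Matrix.mul_assoc]
    refine tendsto_iff_norm_sub_tendsto_zero.2 ?_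
    have hlim := (hGdist.const_mul K).mul_const K
    rw [mul_zero, zero_mul] at hlim
    refine squeeze_zero (fun _ => norm_nonneg _) (fun n => ?_) hlim
    rw [hdiff]
    have hDG : ‖D n - (G n).1‖ ≤ dist (D n, b (n + 1) - D n *ᵥ b n) (G n) := by
      rw [← dist_eq_norm]
      exact le_max_left _ _
    exact norm_mul_le_of_le (norm_mul_le_of_le (hCK (n + 1)) hDG) (hCinvK n)

end AffineActions

/-- **Proposition 1(b).** Under infinitesimality and weak convergence to a full law `μ`,
one may replace `(A_n, b_n)` by `(Ã_n, b̃_n)` with `Ã_n` invertible, such that (ii) and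
(iii) still hold with the same limit `μ`, and `Ã_{n+1} Ã_n⁻¹ → I`. -/
theorem exists_modified_normalizers
    {d : ℕ} {Ω : Type*} [MeasurableSpace Ω] (P : Measure Ω) [IsProbabilityMeasure P]
    (X : ℕ → Ω → (Fin d → ℝ)) (hXmeas : ∀ j, Measurable (X j))
    (A : ℕ → Matrix (Fin d) (Fin d) ℝ) (b : ℕ → Fin d → ℝ)
    (μ : Measure (Fin d → ℝ)) [IsProbabilityMeasure μ] (hfull : IsFull μ)
    (hinf : Infinitesimal P A X)
    (hconv : WeakLim (fun n => P.map (fun ω => (A n).mulVec (partialSum X n ω) + b n)) μ) :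
    ∃ (A' : ℕ → Matrix (Fin d) (Fin d) ℝ) (b' : ℕ → Fin d → ℝ),
      (∀ n, IsUnit (A' n)) ∧
      Infinitesimal P A' X ∧
      WeakLim (fun n => P.map (fun ω => (A' n).mulVec (partialSum X n ω) + b' n)) μ ∧
      Tendsto (fun n => A' (n + 1) * (A' n)⁻¹) atTop (𝓝 1) := by
  classical
  have hY := (weakLim_iff_tendstoInDistribution fun n =>
    measurable_mulVec_partialSum_add hXmeas (A n) (b n) n).1 hconv
  let A₁ : ℕ → Matrix (Fin d) (Fin d) ℝ := fun n => if IsUnit (A n) then A n else 1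
  have hA₁ : ∀ n, IsUnit (A₁ n) := fun n => by
    by_cases h : IsUnit (A n) <;> simp [A₁, h]
  obtain ⟨N, hN⟩ := eventually_atTop.1 (hfull.eventually_isUnit hY)
  have heq : ∀ n ≥ N, A₁ n = A n := fun n hn => if_pos (hN n hn)
  refine exists_modified_normalizers_of_isUnit hXmeas hfull hA₁ (b := b) ?_ ?_
  · intro ε hε δ hδ
    obtain ⟨M, hM⟩ := hinf ε hε δ hδ
    refine ⟨max M N, fun n hn j h1 hj => ?_⟩
    rw [heq n (le_of_max_le_right hn)]
    exact hM n (le_of_max_le_left hn) j h1 hj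
  · refine (weakLim_iff_tendstoInDistribution fun n =>
      measurable_mulVec_partialSum_add hXmeas (A₁ n) (b n) n).1 fun f => ?_
    refine (hconv f).congr' ?_
    filter_upwards [eventually_ge_atTop N] with n hn
    rw [heq n hn]
end

section
/- Let X = (X_1, X_2, …) be a sequence of ℝ^d-valued random vectors with partial sums S_n := X_1 + … + X_n, let A_n be invertible d×d real matrices and b_n ∈ ℝ^d, and assume: (ii) the triangular array (A_n X_j : 1 ≤ j ≤ n, n ≥ 1) is infinitesimal; (iii) the distributions of A_n S_n + b_n converge weakly to a full probability measure μ on ℝ^d. Then |det A_{n+1} / det A_n| → 1 as n → ∞. -/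
open MeasureTheory Filter Topology Matrix

/-- The matrix whose rows are the edge vectors, issuing from the vertex `x 0`, of the simplex
spanned by `d + 1` points of `ℝ^d`. -/
def simplexEdges {d : ℕ} (x : Fin (d + 1) → Fin d → ℝ) : Matrix (Fin d) (Fin d) ℝ :=
  Matrix.of fun i => x i.succ - x 0

theorem det_simplexEdges_affine {d : ℕ} (C : Matrix (Fin d) (Fin d) ℝ) (c : Fin d → ℝ)
    (x : Fin (d + 1) → Fin d → ℝ) :
    (simplexEdges fun i => C *ᵥ x i + c).det = C.det * (simplexEdges x).det := by
  have h : (simplexEdges fun i => C *ᵥ x i + c) = simplexEdges x * Cᵀ := by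
    ext i j
    simp [simplexEdges, Matrix.mul_apply, Matrix.mulVec, dotProduct, ← Finset.sum_sub_distrib,
      ← mul_sub, mul_comm]
  rw [h, Matrix.det_mul, Matrix.det_transpose, mul_comm]

theorem continuous_det_simplexEdges {d : ℕ} :
    Continuous fun x : Fin (d + 1) → Fin d → ℝ => (simplexEdges x).det := by
  refine Continuous.matrix_det (continuous_pi fun i => ?_)
  change Continuous fun x : Fin (d + 1) → Fin d → ℝ => x i.succ - x 0
  fun_prop

theorem IsFull.affineSpan_support_eq_top {d : ℕ} {μ : Measure (Fin d → ℝ)}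
    [IsProbabilityMeasure μ] (h : IsFull μ) : affineSpan ℝ μ.support = ⊤ := by
  obtain ⟨v, hv⟩ := Measure.nonempty_support (IsProbabilityMeasure.ne_zero μ)
  have hv' := subset_affineSpan ℝ _ hv
  by_contra hne
  have hdir : (affineSpan ℝ μ.support).direction ≠ ⊤ := fun htop =>
    hne ((AffineSubspace.direction_eq_top_iff_of_nonempty ⟨v, hv'⟩).1 htop)
  refine (h v _ hdir).ne (le_antisymm prob_le_one ?_)
  have hone : μ μ.support = 1 :=
    (prob_compl_eq_zero_iff₀ Measure.nullMeasurableSet_support).1 Measure.measure_compl_support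
  rw [← hone]
  exact measure_mono fun x hx =>
    AffineSubspace.vsub_mem_direction (subset_affineSpan ℝ _ hx) hv'

/-- A set affinely spanning `ℝ^d` contains the vertices of a nondegenerate simplex. -/
theorem exists_det_simplexEdges_ne_zero {d : ℕ} {s : Set (Fin d → ℝ)}
    (hs : affineSpan ℝ s = ⊤) :
    ∃ x : Fin (d + 1) → Fin d → ℝ, (∀ i, x i ∈ s) ∧ (simplexEdges x).det ≠ 0 := by
  obtain ⟨t, hts, htop, hind⟩ := exists_affineIndependent ℝ (Fin d → ℝ) s
  rw [hs] at htop
  have : Finite t := finite_of_fin_dim_affineIndependent ℝ hind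
  have : Fintype t := Fintype.ofFinite t
  have hcard : Fintype.card t = d + 1 := by
    have := (hind.affineSpan_eq_top_iff_card_eq_finrank_add_one).1 (by simpa using htop)
    simpa using this
  let e : Fin (d + 1) ≃ t := (Fintype.equivFinOfCardEq hcard).symm
  refine ⟨fun i => e i, fun i => hts (e i).2, ?_⟩
  have hind' : AffineIndependent ℝ (fun i : Fin (d + 1) => (e i : Fin d → ℝ)) :=
    hind.comp_embedding e.toEmbedding
  have hlin := (affineIndependent_iff_linearIndependent_vsub ℝ _ (0 : Fin (d + 1))).1 hind'
  have hrows := hlin.comp (fun i : Fin d => (⟨i.succ, Fin.succ_ne_zero i⟩ : {x : Fin (d + 1) // x ≠ 0}))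
    fun i j hij => Fin.succ_injective _ (congrArg Subtype.val hij)
  exact ((Matrix.isUnit_iff_isUnit_det _).1
    (Matrix.linearIndependent_rows_iff_isUnit (A := simplexEdges fun i => (e i : Fin d → ℝ)) |>.1
      hrows)).ne_zero

theorem IsFull.pi_det_simplexEdges_ne_zero {d : ℕ} {μ : Measure (Fin d → ℝ)}
    [IsProbabilityMeasure μ] (h : IsFull μ) :
    Measure.pi (fun _ : Fin (d + 1) => μ) {x | (simplexEdges x).det ≠ 0} ≠ 0 := by
  obtain ⟨x, hx, hdet⟩ := exists_det_simplexEdges_ne_zero h.affineSpan_support_eq_top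
  have hmem : {x | (simplexEdges x).det ≠ 0} ∈ 𝓝 x :=
    (isOpen_ne_fun continuous_det_simplexEdges continuous_const).mem_nhds hdet
  rw [nhds_pi, Filter.mem_pi'] at hmem
  obtain ⟨I, t, ht, hsub⟩ := hmem
  have hpos : Measure.pi (fun _ : Fin (d + 1) => μ) (Set.univ.pi t) ≠ 0 := by
    rw [Measure.pi_pi]
    exact Finset.prod_ne_zero_iff.2 fun i _ =>
      ((Measure.mem_support_iff_forall _).1 (hx i) _ (ht i)).ne'
  exact fun h0 => hpos (measure_mono_null
    ((Set.pi_mono' (fun _ _ => subset_rfl) (Set.subset_univ _)).trans hsub) h0)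

theorem integrable_exp_neg_mul {E : Type*} [TopologicalSpace E] [MeasurableSpace E]
    [OpensMeasurableSpace E] (ν : Measure E) [IsProbabilityMeasure ν] {W : E → ℝ}
    (hW : Continuous W) (hW0 : ∀ x, 0 ≤ W x) {t : ℝ} (ht : 0 ≤ t) :
    Integrable (fun x => Real.exp (-(t * W x))) ν := by
  refine Integrable.of_bound (C := 1)
    (Continuous.measurable (by fun_prop)).aestronglyMeasurable (ae_of_all _ fun x => ?_)
  rw [Real.norm_eq_abs, Real.abs_exp, Real.exp_le_one_iff]
  have := mul_nonneg ht (hW0 x)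
  linarith

/-- The Laplace transform of a nonnegative function that does not vanish almost everywhere is
strictly decreasing. -/
theorem integral_exp_neg_mul_lt {E : Type*} [TopologicalSpace E] [MeasurableSpace E]
    [OpensMeasurableSpace E] (ν : Measure E) [IsProbabilityMeasure ν] {W : E → ℝ}
    (hW : Continuous W) (hW0 : ∀ x, 0 ≤ W x) (hν : ν {x | W x ≠ 0} ≠ 0) {s t : ℝ}
    (hs : 0 ≤ s) (hst : s < t) :
    ∫ x, Real.exp (-(t * W x)) ∂ν < ∫ x, Real.exp (-(s * W x)) ∂ν := by
  have hs' := integrable_exp_neg_mul ν hW hW0 hs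
  have ht' := integrable_exp_neg_mul ν hW hW0 (hs.trans hst.le)
  rw [← sub_pos, ← integral_sub hs' ht']
  refine (integral_pos_iff_support_of_nonneg (fun x => ?_) (hs'.sub ht')).2 ?_
  · exact sub_nonneg.2
      (Real.exp_le_exp.2 (neg_le_neg (mul_le_mul_of_nonneg_right hst.le (hW0 x))))
  · refine pos_iff_ne_zero.2 fun h0 => hν (measure_mono_null (fun x hx => ?_) h0)
    exact (sub_pos.2 (Real.exp_lt_exp.2
      (neg_lt_neg (mul_lt_mul_of_pos_right hst ((hW0 x).lt_of_ne' hx))))).ne'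

/-- Convergence of types for scalings of a nonnegative function: if the laws `νs n` converge
to `ν` and rescaling `W` by `r n` does not change the limit law of `W`, then `r n → 1`. -/
theorem tendsto_scale_one {E : Type*} [TopologicalSpace E] [MeasurableSpace E]
    [OpensMeasurableSpace E] {νs : ℕ → ProbabilityMeasure E} {ν : ProbabilityMeasure E}
    (hνs : Tendsto νs atTop (𝓝 ν)) {W : E → ℝ} (hW : Continuous W) (hW0 : ∀ x, 0 ≤ W x)
    (hν : (ν : Measure E) {x | W x ≠ 0} ≠ 0) {r : ℕ → ℝ} (hr : ∀ n, 0 ≤ r n)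
    (hlim : Tendsto (fun n => ∫ x, Real.exp (-(r n * W x)) ∂(νs n : Measure E)) atTop
      (𝓝 (∫ x, Real.exp (-(1 * W x)) ∂(ν : Measure E)))) :
    Tendsto r atTop (𝓝 1) := by
  have hfix : ∀ t : ℝ, 0 ≤ t →
      Tendsto (fun n => ∫ x, Real.exp (-(t * W x)) ∂(νs n : Measure E)) atTop
        (𝓝 (∫ x, Real.exp (-(t * W x)) ∂(ν : Measure E))) := fun t ht =>
    ProbabilityMeasure.tendsto_iff_forall_integral_tendsto.1 hνs
      (BoundedContinuousFunction.ofNormedAddCommGroup (fun x => Real.exp (-(t * W x)))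
        (by fun_prop) 1 fun x => by
          rw [Real.norm_eq_abs, Real.abs_exp, Real.exp_le_one_iff]
          have := mul_nonneg ht (hW0 x)
          linarith)
  have hmono : ∀ n, ∀ s t : ℝ, 0 ≤ s → s ≤ t →
      ∫ x, Real.exp (-(t * W x)) ∂(νs n : Measure E) ≤
        ∫ x, Real.exp (-(s * W x)) ∂(νs n : Measure E) := fun n s t hs hst =>
    integral_mono (integrable_exp_neg_mul _ hW hW0 (hs.trans hst))
      (integrable_exp_neg_mul _ hW hW0 hs) fun x =>
        Real.exp_le_exp.2 (neg_le_neg (mul_le_mul_of_nonneg_right hst (hW0 x)))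
  refine tendsto_order.2 ⟨fun a ha => ?_, fun a ha => ?_⟩
  · have ha' : max a 0 < 1 := max_lt ha one_pos
    filter_upwards [hlim.eventually_lt (hfix _ (le_max_right a 0))
      (integral_exp_neg_mul_lt _ hW hW0 hν (le_max_right a 0) ha')] with n hn
    by_contra! hra
    exact hn.not_ge (hmono n _ _ (hr n) (hra.trans (le_max_left a 0)))
  · have ha0 : 0 ≤ a := zero_le_one.trans ha.le
    filter_upwards [(hfix a ha0).eventually_lt hlim
      (integral_exp_neg_mul_lt _ hW hW0 hν zero_le_one ha)] with n hn
    by_contra! hra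
    exact hn.not_ge (hmono n _ _ ha0 hra)

/-- If laws `νs n` and their images under affine maps `x ↦ C n x + c n` converge to the same
full law, then `|det (C n)| → 1`. -/
theorem IsFull.tendsto_abs_det_one {d : ℕ} {μ : ProbabilityMeasure (Fin d → ℝ)}
    (hfull : IsFull (μ : Measure (Fin d → ℝ))) {νs νs' : ℕ → ProbabilityMeasure (Fin d → ℝ)}
    (hνs : Tendsto νs atTop (𝓝 μ)) (hνs' : Tendsto νs' atTop (𝓝 μ))
    (C : ℕ → Matrix (Fin d) (Fin d) ℝ) (c : ℕ → Fin d → ℝ)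
    (hmap : ∀ n, (νs' n : Measure (Fin d → ℝ)) =
      (νs n : Measure (Fin d → ℝ)).map fun x => C n *ᵥ x + c n) :
    Tendsto (fun n => |(C n).det|) atTop (𝓝 1) := by
  have hpi : ∀ {ρ : ℕ → ProbabilityMeasure (Fin d → ℝ)}, Tendsto ρ atTop (𝓝 μ) →
      Tendsto (fun n => ProbabilityMeasure.pi fun _ : Fin (d + 1) => ρ n) atTop
        (𝓝 (ProbabilityMeasure.pi fun _ : Fin (d + 1) => μ)) := fun hρ =>
    (ProbabilityMeasure.continuous_pi.tendsto _).comp (tendsto_pi_nhds.2 fun _ => hρ)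
  have hW : Continuous fun x : Fin (d + 1) → Fin d → ℝ => |(simplexEdges x).det| :=
    continuous_det_simplexEdges.abs
  refine tendsto_scale_one (hpi hνs) hW (fun x => abs_nonneg _) ?_ (fun n => abs_nonneg _) ?_
  · simpa using hfull.pi_det_simplexEdges_ne_zero
  have hlim := ProbabilityMeasure.tendsto_iff_forall_integral_tendsto.1 (hpi hνs')
    (BoundedContinuousFunction.ofNormedAddCommGroup
      (fun x => Real.exp (-(1 * |(simplexEdges x).det|))) (by fun_prop) 1 fun x => by
        rw [Real.norm_eq_abs, Real.abs_exp, Real.exp_le_one_iff]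
        simp)
  refine hlim.congr fun n => ?_
  have hmeas : Measurable fun x : Fin d → ℝ => C n *ᵥ x + c n :=
    Continuous.measurable (by fun_prop)
  have hprob : IsProbabilityMeasure
      ((νs n : Measure (Fin d → ℝ)).map fun x => C n *ᵥ x + c n) :=
    Measure.isProbabilityMeasure_map hmeas.aemeasurable
  simp only [ProbabilityMeasure.toMeasure_pi, hmap n,
    BoundedContinuousFunction.coe_ofNormedAddCommGroup]
  rw [← Measure.pi_map_pi fun _ => hmeas.aemeasurable, integral_map]
  · simp only [det_simplexEdges_affine, abs_mul, one_mul]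
  · exact (measurable_pi_lambda _ fun i => hmeas.comp (measurable_pi_apply i)).aemeasurable
  · exact (Continuous.measurable (by fun_prop)).aestronglyMeasurable

/-- **Proposition 1(c).** Under infinitesimality and weak convergence to a full law,
with the `A_n` invertible, `|det A_{n+1} / det A_n| → 1`. -/
theorem abs_det_ratio_tendsto_one
    {d : ℕ} {Ω : Type*} [MeasurableSpace Ω] (P : Measure Ω) [IsProbabilityMeasure P]
    (X : ℕ → Ω → (Fin d → ℝ)) (hXmeas : ∀ j, Measurable (X j))
    (A : ℕ → Matrix (Fin d) (Fin d) ℝ) (hAinv : ∀ n, IsUnit (A n)) (b : ℕ → Fin d → ℝ)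
    (μ : Measure (Fin d → ℝ)) [IsProbabilityMeasure μ] (hfull : IsFull μ)
    (hinf : Infinitesimal P A X)
    (hconv : WeakLim (fun n => P.map (fun ω => (A n).mulVec (partialSum X n ω) + b n)) μ) :
    Tendsto (fun n => |(A (n + 1)).det / (A n).det|) atTop (𝓝 1) := by
  have hS : ∀ n, Measurable (partialSum X n) := fun n =>
    Finset.measurable_fun_sum _ fun j _ => hXmeas j
  have haff : ∀ m n, Measurable fun ω => A m *ᵥ partialSum X n ω + b m := fun m n =>
    (Continuous.measurable (f := fun x : Fin d → ℝ => A m *ᵥ x + b m) (by fun_prop)).comp (hS n)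
  have hY : TendstoInDistribution (fun n ω => A n *ᵥ partialSum X n ω + b n) atTop id
      (fun _ => P) μ :=
    { forall_aemeasurable := fun n => (haff n n).aemeasurable
      tendsto := ProbabilityMeasure.tendsto_iff_forall_integral_tendsto.2 fun f => by
        simpa using hconv f }
  have hY' : TendstoInDistribution
      (fun n ω => A (n + 1) *ᵥ partialSum X (n + 1) ω + b (n + 1)) atTop id (fun _ => P) μ :=
    { forall_aemeasurable := fun n => (haff (n + 1) (n + 1)).aemeasurable
      tendsto := hY.tendsto.comp (tendsto_add_atTop_nat 1) }
  have hZ : TendstoInDistribution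
      (fun n ω => A (n + 1) *ᵥ partialSum X n ω + b (n + 1)) atTop id (fun _ => P) μ := by
    refine tendstoInDistribution_of_tendstoInMeasure_sub _ _ hY' ?_
      fun n => (haff (n + 1) n).aemeasurable
    rw [tendstoInMeasure_iff_measureReal_norm]
    intro ε hε
    rw [Metric.tendsto_atTop]
    intro δ hδ
    obtain ⟨N, hN⟩ := hinf ε hε δ hδ
    refine ⟨N, fun n hn => ?_⟩
    have hdiff : ∀ ω, A (n + 1) *ᵥ partialSum X n ω + b (n + 1) -
        (A (n + 1) *ᵥ partialSum X (n + 1) ω + b (n + 1)) = -(A (n + 1) *ᵥ X (n + 1) ω) := by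
      intro ω
      rw [partialSum, partialSum, Finset.sum_Icc_succ_top (by omega), Matrix.mulVec_add]
      abel
    rw [Real.dist_0_eq_abs, abs_of_nonneg measureReal_nonneg]
    simpa [hdiff, Measure.real] using hN (n + 1) (by omega) (n + 1) (by omega) le_rfl
  have hdet : ∀ n, IsUnit (A n).det := fun n => (Matrix.isUnit_iff_isUnit_det _).1 (hAinv n)
  have key := IsFull.tendsto_abs_det_one (by simpa using hfull) hY.tendsto hZ.tendsto
    (fun n => A (n + 1) * (A n)⁻¹) (fun n => b (n + 1) - (A (n + 1) * (A n)⁻¹) *ᵥ b n) fun n => by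
      simp only [ProbabilityMeasure.coe_mk]
      rw [Measure.map_map (Continuous.measurable (by fun_prop)) (haff n n)]
      congr 1
      ext1 ω
      simp only [Function.comp_apply, Matrix.mulVec_add, Matrix.mulVec_mulVec]
      rw [Matrix.mul_assoc, Matrix.nonsing_inv_mul _ (hdet n), Matrix.mul_one]
      abel
  refine key.congr fun n => ?_
  rw [Matrix.det_mul, Matrix.det_nonsing_inv, Ring.inverse_eq_inv', div_eq_mul_inv]
end
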